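/- Let 1/2 ≤ α < 1, let c > 0 and let 0 < β < 1/2. Define u(x,t) = (1/π) ∫_0^∞ E_α((1−ξ²) t^α) cos(xξ) dξ for x ∈ ℝ and t > 0. Then u(c·t^β, t) → +∞ as t → +∞. -/

import Mathlib

open Real MeasureTheory

/-- The Mittag-Leffler function `E_α(r) = ∑ r^k / Γ(1+kα)`. -/
noncomputable def mittagLeffler (α r : ℝ) : ℝ :=
  ∑' k : ℕ, r ^ k / Real.Gamma (1 + k * α)

/-- The fundamental solution of the one-dimensional time-fractional reaction-diffusion
problem `∂_t^α u − u_xx = u` with a Dirac delta initial datum (case `a = d = 1`). -/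
noncomputable def fundSol (α x t : ℝ) : ℝ :=
  (1 / π) * ∫ ξ in Set.Ioi (0 : ℝ), mittagLeffler α ((1 - ξ ^ 2) * t ^ α) * Real.cos (x * ξ)

open PowerSeries Finset Filter Topology

/-- The power series `(1 - X) ^ (-a)`. -/
noncomputable def negBinomSeries (a : ℝ) : PowerSeries ℝ :=
  rescale (-1 : ℝ) (binomialSeries ℝ (-a))

/-- The coefficient `a (a + 1) ⋯ (a + n - 1) / n!` of `(1 - X) ^ (-a)`. -/
noncomputable def negBinomCoeff (a : ℝ) (n : ℕ) : ℝ :=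
  ∏ j ∈ range n, (a + j) / (j + 1)

lemma negBinomSeries_add (a b : ℝ) :
    negBinomSeries (a + b) = negBinomSeries a * negBinomSeries b := by
  rw [negBinomSeries, neg_add, binomialSeries_add, map_mul]; rfl

lemma negBinomSeries_zero : negBinomSeries 0 = 1 := by
  simp [negBinomSeries]

lemma coeff_negBinomSeries (a : ℝ) (n : ℕ) :
    coeff n (negBinomSeries a) = negBinomCoeff a n := by
  have h : Ring.choose (-a) n = (-1) ^ n * Ring.multichoose a n := by
    rw [Ring.choose_neg, Ring.multichoose_eq, Units.smul_def, ← Int.cast_negOnePow_natCast,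
      zsmul_eq_mul]
  have h2 := Ring.factorial_nsmul_multichoose_eq_ascPochhammer a n
  have h4 : ∀ m, (ascPochhammer ℝ m).eval a = ∏ j ∈ range m, (a + j) := by
    intro m
    induction m with
    | zero => simp
    | succ m ih => rw [ascPochhammer_succ_eval, ih, prod_range_succ]
  rw [Polynomial.ascPochhammer_smeval_eq_eval, h4] at h2
  rw [negBinomSeries, coeff_rescale, binomialSeries_coeff, h, negBinomCoeff, prod_div_distrib,
    ← h2]
  have h3 : ∏ x ∈ range n, ((x : ℝ) + 1) = n.factorial := by
    rw [← prod_range_add_one_eq_factorial]; push_cast; rfl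
  rw [h3, nsmul_eq_mul, mul_div_cancel_left₀ _ (by positivity), smul_eq_mul, mul_one,
    ← mul_assoc, ← mul_pow]
  simp

lemma negBinomCoeff_zero_right (a : ℝ) : negBinomCoeff a 0 = 1 := by simp [negBinomCoeff]

lemma negBinomCoeff_succ (a : ℝ) (n : ℕ) :
    negBinomCoeff a (n + 1) = negBinomCoeff a n * ((a + n) / (n + 1)) := by
  rw [negBinomCoeff, prod_range_succ, negBinomCoeff]

lemma negBinomCoeff_nonneg {a : ℝ} (ha : 0 ≤ a) (n : ℕ) : 0 ≤ negBinomCoeff a n :=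
  prod_nonneg fun j _ => by positivity

lemma negBinomCoeff_one (n : ℕ) : negBinomCoeff 1 n = 1 :=
  prod_eq_one fun j _ => by rw [add_comm]; exact div_self (by positivity)

lemma negBinomCoeff_neg_succ_nonpos {a : ℝ} (ha : 0 ≤ a) (ha1 : a ≤ 1) (n : ℕ) :
    negBinomCoeff (-a) (n + 1) ≤ 0 := by
  rw [negBinomCoeff, prod_range_succ']
  refine mul_nonpos_of_nonneg_of_nonpos (prod_nonneg fun j _ => ?_) (by simpa using ha)
  have : (0 : ℝ) ≤ j := j.cast_nonneg
  push_cast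
  exact div_nonneg (by linarith) (by linarith)

lemma negBinomCoeff_one_add_le {x : ℝ} (hx : 0 ≤ x) (n : ℕ) :
    negBinomCoeff (1 + x) n ≤ (1 + x) ^ n := by
  refine (prod_le_prod (fun j _ => by positivity) (g := fun _ => 1 + x) fun j _ => ?_).trans
    (by simp)
  have : (0 : ℝ) ≤ j := j.cast_nonneg
  rw [div_le_iff₀ (by linarith)]
  nlinarith

/-- A power series solving `μ F = Q + U F` with nonnegative data has nonnegative coefficients. -/
lemma coeff_nonneg_of_smul_eq_add_mul {F Q U : PowerSeries ℝ} {μ : ℝ} (hμ : 0 < μ)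
    (hQ : ∀ n, 0 ≤ coeff n Q) (hU : ∀ n, 0 ≤ coeff n U) (hU0 : coeff 0 U = 0)
    (h : μ • F = Q + U * F) (n : ℕ) : 0 ≤ coeff n F := by
  induction n using Nat.strong_induction_on with
  | _ n ih =>
    have h1 := congrArg (coeff n) h
    rw [map_add, coeff_mul, coeff_smul, smul_eq_mul] at h1
    have h2 : 0 ≤ ∑ p ∈ antidiagonal n, coeff p.1 U * coeff p.2 F := by
      refine sum_nonneg fun p hp => ?_
      rw [HasAntidiagonal.mem_antidiagonal] at hp
      rcases Nat.eq_zero_or_pos p.1 with h0 | h0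
      · rw [h0, hU0, zero_mul]
      · exact mul_nonneg (hU _) (ih _ (by omega))
    have h3 := hQ n
    exact nonneg_of_mul_nonneg_right (by linarith) hμ

/-- Bounds for the solution of the discretised relaxation equation `D^α f = -l f`, written in terms
of generating functions. -/
lemma discrete_relaxation_bounds {α l : ℝ} (hα0 : 0 < α) (hα1 : α < 1) (hl : 0 < l)
    {F : PowerSeries ℝ}
    (hF : F * negBinomSeries (-α) + l • F = negBinomSeries (1 - α)) (n : ℕ) :
    0 ≤ coeff n F ∧ coeff n F ≤ 1 ∧ coeff n F * (l * negBinomCoeff (1 + α) n) ≤ 1 := by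
  set W := negBinomSeries (-α) with hW
  have hU : ∀ n, 0 ≤ coeff n (1 - W) := by
    intro n
    rw [map_sub, hW, coeff_negBinomSeries]
    rcases n with _ | n
    · simp [negBinomCoeff_zero_right]
    · have := negBinomCoeff_neg_succ_nonpos hα0.le hα1.le n
      simp only [coeff_one, Nat.succ_ne_zero, if_false]; linarith
  have hU0 : coeff 0 (1 - W) = 0 := by
    rw [map_sub, hW, coeff_negBinomSeries, negBinomCoeff_zero_right]; simp
  have h1l : 0 < 1 + l := by linarith
  have hpos : ∀ n, 0 ≤ coeff n F := by
    refine coeff_nonneg_of_smul_eq_add_mul h1l (Q := negBinomSeries (1 - α))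
      (fun n => ?_) hU hU0 ?_
    · rw [coeff_negBinomSeries]; exact negBinomCoeff_nonneg (by linarith) n
    · rw [← hF, add_smul, one_smul]; ring
  have hV : negBinomSeries (-1) * negBinomSeries (1 - α) = W := by
    rw [← negBinomSeries_add, hW]; congr 1; ring
  have hV1 : negBinomSeries (-1) = 1 - X := by
    have : negBinomSeries (-1) = rescale (-1 : ℝ) (binomialSeries ℝ ((1 : ℕ) : ℝ)) := by
      simp [negBinomSeries]
    rw [this, binomialSeries_nat]
    simp [rescale_X, sub_eq_add_neg]
  have hH : ∀ n, 0 ≤ coeff n (1 - (1 - X) * F) := by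
    refine coeff_nonneg_of_smul_eq_add_mul h1l (Q := C l) (fun n => ?_) hU hU0 ?_
    · rw [coeff_C]; split_ifs <;> linarith
    · rw [← hV1, smul_eq_C_mul, map_add, map_one]
      rw [smul_eq_C_mul] at hF
      rw [← hF] at hV
      linear_combination (-1 : PowerSeries ℝ) * hV
  have hanti : Antitone fun n => coeff n F := by
    refine antitone_nat_of_succ_le fun n => ?_
    have := hH (n + 1)
    rw [sub_mul, one_mul, map_sub, map_sub, coeff_succ_X_mul] at this
    simp [coeff_one] at this
    linarith
  have hK : F + l • (negBinomSeries α * F) = negBinomSeries 1 := by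
    have h1 : negBinomSeries α * W = 1 := by
      rw [hW, ← negBinomSeries_add, add_neg_cancel, negBinomSeries_zero]
    have h2 : negBinomSeries α * negBinomSeries (1 - α) = negBinomSeries 1 := by
      rw [← negBinomSeries_add]; congr 1; ring
    rw [← h2, ← hF, smul_eq_C_mul, smul_eq_C_mul]
    linear_combination (-F) * h1
  have hn := congrArg (coeff n) hK
  rw [map_add, coeff_smul, coeff_negBinomSeries, negBinomCoeff_one, coeff_mul, smul_eq_mul] at hn
  have hsum : coeff n F * negBinomCoeff (1 + α) n ≤
      ∑ p ∈ antidiagonal n, coeff p.1 (negBinomSeries α) * coeff p.2 F := by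
    rw [← coeff_negBinomSeries, add_comm 1 α, negBinomSeries_add, coeff_mul, mul_sum]
    refine sum_le_sum fun p hp => ?_
    rw [HasAntidiagonal.mem_antidiagonal] at hp
    rw [coeff_negBinomSeries 1, negBinomCoeff_one, mul_one, mul_comm]
    refine mul_le_mul_of_nonneg_left (hanti (by omega)) ?_
    rw [coeff_negBinomSeries]; exact negBinomCoeff_nonneg hα0.le _
  have hs0 : 0 ≤ coeff n F * negBinomCoeff (1 + α) n :=
    mul_nonneg (hpos n) (negBinomCoeff_nonneg (by linarith) n)
  have h5 := mul_le_mul_of_nonneg_left hsum hl.le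
  have h6 := mul_nonneg hl.le hs0
  have h7 := hpos n
  refine ⟨hpos n, by linarith, ?_⟩
  linarith [mul_left_comm (coeff n F) l (negBinomCoeff (1 + α) n)]

lemma summable_pow_mul_negBinomCoeff {α l : ℝ} (hα0 : 0 < α) (hα1 : α < 1) (hl : 0 < l)
    (hl1 : l < 1) (n : ℕ) : Summable fun k : ℕ => l ^ k * negBinomCoeff (1 + k * α) n := by
  have h1 : Summable fun k : ℕ => (k : ℝ) ^ n * l ^ k :=
    summable_pow_mul_geometric_of_norm_lt_one n (by rwa [norm_of_nonneg hl.le])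
  have h2 := ((summable_nat_add_iff 1).2 h1).mul_left l⁻¹
  refine Summable.of_nonneg_of_le (fun k => ?_) (fun k => ?_) h2
  · exact mul_nonneg (by positivity) (negBinomCoeff_nonneg (by positivity) n)
  · have h3 : negBinomCoeff (1 + k * α) n ≤ ((k : ℝ) + 1) ^ n := by
      refine (negBinomCoeff_one_add_le (by positivity) n).trans ?_
      refine pow_le_pow_left₀ (by positivity) ?_ n
      have : (0 : ℝ) ≤ k := k.cast_nonneg
      nlinarith
    have h4 : l⁻¹ * (((k + 1 : ℕ) : ℝ) ^ n * l ^ (k + 1)) = l ^ k * ((k : ℝ) + 1) ^ n := by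
      push_cast; field_simp; ring
    rw [h4]
    gcongr

/-- The discrete relaxation series `∑ (-l)^k (1 - X)^(-1 - kα)`, summed coefficientwise. -/
noncomputable def relaxationSeries (α l : ℝ) : PowerSeries ℝ :=
  PowerSeries.mk fun n => ∑' k : ℕ, (-l) ^ k * negBinomCoeff (1 + k * α) n

lemma relaxationSeries_mul_add {α l : ℝ} (hα0 : 0 < α) (hα1 : α < 1) (hl : 0 < l)
    (hl1 : l < 1) :
    relaxationSeries α l * negBinomSeries (-α) + l • relaxationSeries α l =
      negBinomSeries (1 - α) := by
  have hs : ∀ n, Summable fun k : ℕ => (-l) ^ k * negBinomCoeff (1 + k * α) n := by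
    intro n
    refine Summable.of_norm ?_
    convert summable_pow_mul_negBinomCoeff hα0 hα1 hl hl1 n using 2 with k
    rw [norm_mul, norm_pow, norm_neg, norm_of_nonneg hl.le,
      norm_of_nonneg (negBinomCoeff_nonneg (by positivity) n)]
  ext n
  rw [map_add, coeff_smul, coeff_mul, smul_eq_mul]
  have h1 : ∀ p ∈ antidiagonal n,
      coeff p.1 (relaxationSeries α l) * coeff p.2 (negBinomSeries (-α)) =
      ∑' k : ℕ, (-l) ^ k * negBinomCoeff (1 + k * α) p.1 * negBinomCoeff (-α) p.2 := by
    intro p _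
    rw [relaxationSeries, coeff_mk, coeff_negBinomSeries, tsum_mul_right]
  rw [sum_congr rfl h1, ← Summable.tsum_finsetSum fun p _ => (hs p.1).mul_right _]
  have h2 : ∀ k : ℕ, ∑ p ∈ antidiagonal n,
      (-l) ^ k * negBinomCoeff (1 + k * α) p.1 * negBinomCoeff (-α) p.2 =
      (-l) ^ k * negBinomCoeff (1 - α + k * α) n := by
    intro k
    rw [show 1 - α + k * α = (1 + k * α) + -α by ring, ← coeff_negBinomSeries _ n,
      negBinomSeries_add, coeff_mul, mul_sum]
    exact sum_congr rfl fun p _ => by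
      rw [coeff_negBinomSeries, coeff_negBinomSeries, mul_assoc]
  have h3 : ∀ k : ℕ, (-l) ^ (k + 1) * negBinomCoeff (1 - α + (k + 1 : ℕ) * α) n =
      -l * ((-l) ^ k * negBinomCoeff (1 + k * α) n) := by
    intro k
    rw [show 1 - α + (k + 1 : ℕ) * α = 1 + k * α by push_cast; ring]
    ring
  have h4 : Summable fun k : ℕ => (-l) ^ k * negBinomCoeff (1 - α + k * α) n := by
    rw [← summable_nat_add_iff 1]
    simp_rw [h3]
    exact (hs n).mul_left _
  simp_rw [h2]
  rw [h4.tsum_eq_zero_add]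
  simp_rw [h3]
  rw [tsum_mul_left, relaxationSeries, coeff_mk, coeff_negBinomSeries]
  simp

/-- The normalisation of `negBinomCoeff (1 + x) n` that converges to `1 / Γ(1 + x)`. -/
noncomputable def gammaInvSeq (x : ℝ) (n : ℕ) : ℝ :=
  (n : ℝ) ^ (-x) * negBinomCoeff (1 + x) n

lemma gammaInvSeq_nonneg {x : ℝ} (hx : 0 ≤ x) (n : ℕ) : 0 ≤ gammaInvSeq x n :=
  mul_nonneg (by positivity) (negBinomCoeff_nonneg (by positivity) n)

lemma gammaInvSeq_succ_le {x : ℝ} (hx : 0 ≤ x) {n : ℕ} (hn : 1 ≤ n) :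
    gammaInvSeq x (n + 1) ≤ gammaInvSeq x n := by
  have hn0 : (0 : ℝ) < n := by exact_mod_cast hn
  have hn1 : (0 : ℝ) < (n : ℝ) + 1 := by linarith
  have h1 : ((n : ℝ) / (n + 1)) ^ x * ((1 + x + n) / (n + 1)) ≤ 1 := by
    have ha : (n : ℝ) / (n + 1) ≤ exp (-(1 / (n + 1))) := by
      have := add_one_le_exp (-(1 / ((n : ℝ) + 1)))
      refine le_trans (le_of_eq ?_) this
      field_simp; ring
    have hb : (1 + x + n) / ((n : ℝ) + 1) ≤ exp (x / (n + 1)) := by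
      have := add_one_le_exp (x / ((n : ℝ) + 1))
      refine le_trans (le_of_eq ?_) this
      field_simp; ring
    calc ((n : ℝ) / (n + 1)) ^ x * ((1 + x + n) / (n + 1))
        ≤ exp (-(1 / ((n : ℝ) + 1))) ^ x * exp (x / (n + 1)) := by gcongr
      _ = 1 := by
        rw [← exp_mul, ← exp_add, exp_eq_one_iff]; ring
  have h2 : ((n + 1 : ℕ) : ℝ) ^ (-x) = (n : ℝ) ^ (-x) * ((n : ℝ) / (n + 1)) ^ x := by
    push_cast
    rw [div_rpow hn0.le hn1.le, rpow_neg hn1.le, rpow_neg hn0.le]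
    have := rpow_pos_of_pos hn0 x
    field_simp
  rw [gammaInvSeq, negBinomCoeff_succ, h2]
  calc _ = gammaInvSeq x n * (((n : ℝ) / (n + 1)) ^ x * ((1 + x + n) / (n + 1))) := by
        rw [gammaInvSeq]; ring
    _ ≤ gammaInvSeq x n := mul_le_of_le_one_right (gammaInvSeq_nonneg hx n) h1

lemma gammaInvSeq_le {x : ℝ} (hx : 0 ≤ x) {m n : ℕ} (hm : 1 ≤ m) (hmn : m ≤ n) :
    gammaInvSeq x n ≤ gammaInvSeq x m := by
  induction n, hmn using Nat.le_induction with
  | base => exact le_rfl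
  | succ n hn ih => exact (gammaInvSeq_succ_le hx (hm.trans hn)).trans ih

lemma tendsto_gammaInvSeq {x : ℝ} (hx : 0 ≤ x) :
    Tendsto (gammaInvSeq x) atTop (𝓝 (1 / Gamma (1 + x))) := by
  rcases hx.eq_or_lt with rfl | hx
  · have : gammaInvSeq 0 = fun _ => 1 := by
      ext n; rw [gammaInvSeq, add_zero, negBinomCoeff_one, neg_zero, rpow_zero, mul_one]
    rw [this]; simp
  · have h1 := ((GammaSeq_tendsto_Gamma x).const_mul x).inv₀
      (mul_pos hx (Gamma_pos_of_pos hx)).ne'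
    rw [add_comm 1 x, Gamma_add_one hx.ne', one_div]
    refine h1.congr' ?_
    filter_upwards [eventually_ge_atTop 1] with n hn
    have hn0 : (0 : ℝ) < n := by exact_mod_cast hn
    have h3 : ∏ j ∈ range n, ((j : ℝ) + 1) = n.factorial := by
      rw [← prod_range_add_one_eq_factorial]; push_cast; rfl
    have h4 : ∏ j ∈ range n, (x + (j + 1 : ℕ)) = ∏ j ∈ range n, (1 + x + j) :=
      prod_congr rfl fun j _ => by push_cast; ring
    have h5 : ∏ j ∈ range n, (1 + x + j) ≠ 0 :=
      (prod_pos fun j _ => by positivity).ne'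
    rw [GammaSeq, gammaInvSeq, negBinomCoeff, prod_div_distrib, h3, rpow_neg hn0.le,
      prod_range_succ', h4]
    have := (rpow_pos_of_pos hn0 x).ne'
    have := n.factorial_ne_zero
    simp only [Nat.cast_zero, add_zero]
    field_simp

/-- On the negative half-line the Mittag-Leffler function lies in `[0, 1]` and is at most
`Γ(1 + α) / y`. -/
lemma mittagLeffler_neg_bounds {α y : ℝ} (hα0 : 0 < α) (hα1 : α < 1) (hy : 0 < y) :
    0 ≤ mittagLeffler α (-y) ∧ mittagLeffler α (-y) ≤ 1 ∧
      mittagLeffler α (-y) * y ≤ Gamma (1 + α) := by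
  have hpow : ∀ (n k : ℕ), (y / (n : ℝ) ^ α) ^ k * negBinomCoeff (1 + k * α) n =
      y ^ k * gammaInvSeq (k * α) n := by
    intro n k
    rw [gammaInvSeq, rpow_neg n.cast_nonneg, mul_comm (k : ℝ) α, rpow_mul n.cast_nonneg,
      rpow_natCast, div_pow]
    ring
  have hsmall : ∀ᶠ n : ℕ in atTop, 1 ≤ n ∧ 0 < y / (n : ℝ) ^ α ∧ y / (n : ℝ) ^ α < 1 := by
    have h := ((tendsto_rpow_atTop hα0).comp tendsto_natCast_atTop_atTop).eventually_gt_atTop y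
    filter_upwards [h, eventually_ge_atTop 1] with n hn hn1
    have : 0 < (n : ℝ) ^ α := hy.trans hn
    exact ⟨hn1, by positivity, (div_lt_one this).2 hn⟩
  have hlim : Tendsto (fun n : ℕ => coeff n (relaxationSeries α (y / (n : ℝ) ^ α))) atTop
      (𝓝 (mittagLeffler α (-y))) := by
    obtain ⟨N, hN1, hN0, hN⟩ := hsmall.exists
    have hterm : ∀ (n k : ℕ), (-(y / (n : ℝ) ^ α)) ^ k * negBinomCoeff (1 + k * α) n =
        (-y) ^ k * gammaInvSeq (k * α) n := by
      intro n k
      rw [neg_pow, mul_assoc, hpow, neg_pow y, mul_assoc]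
    simp_rw [relaxationSeries, coeff_mk, hterm, mittagLeffler]
    refine tendsto_tsum_of_dominated_convergence
      (bound := fun k : ℕ => y ^ k * gammaInvSeq (k * α) N) ?_ (fun k => ?_) ?_
    · simp_rw [← hpow]
      exact summable_pow_mul_negBinomCoeff hα0 hα1 hN0 hN N
    · rw [div_eq_mul_one_div]
      exact (tendsto_gammaInvSeq (by positivity)).const_mul _
    · filter_upwards [eventually_ge_atTop N] with n hn k
      rw [norm_mul, norm_pow, norm_neg, norm_of_nonneg hy.le,
        norm_of_nonneg (gammaInvSeq_nonneg (by positivity) n)]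
      gcongr
      exact gammaInvSeq_le (by positivity) hN1 hn
  have hb : ∀ᶠ n : ℕ in atTop, 0 ≤ coeff n (relaxationSeries α (y / (n : ℝ) ^ α)) ∧
      coeff n (relaxationSeries α (y / (n : ℝ) ^ α)) ≤ 1 ∧
      coeff n (relaxationSeries α (y / (n : ℝ) ^ α)) * (y * gammaInvSeq α n) ≤ 1 := by
    filter_upwards [hsmall] with n hn
    have h := discrete_relaxation_bounds hα0 hα1 hn.2.1
      (relaxationSeries_mul_add hα0 hα1 hn.2.1 hn.2.2) n
    have h1 := hpow n 1
    simp only [pow_one, Nat.cast_one, one_mul] at h1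
    rwa [h1] at h
  refine ⟨ge_of_tendsto hlim (hb.mono fun n h => h.1),
    le_of_tendsto hlim (hb.mono fun n h => h.2.1), ?_⟩
  have h := le_of_tendsto (hlim.mul ((tendsto_gammaInvSeq hα0.le).const_mul y))
    (hb.mono fun n h => h.2.2)
  have hG : 0 < Gamma (1 + α) := Gamma_pos_of_pos (by linarith)
  rw [mul_one_div, ← mul_div_assoc, div_le_one hG] at h
  exact h

lemma factorial_floor_le_two_mul_Gamma {s : ℝ} (hs : 0 ≤ s) :
    ((⌊s⌋₊).factorial : ℝ) ≤ 2 * Gamma (1 + s) := by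
  have h1 := Nat.floor_le hs
  have h2 := Nat.lt_floor_add_one s
  set n := ⌊s⌋₊
  have hn : (0 : ℝ) ≤ n := n.cast_nonneg
  have h3 : Gamma (((n + 1 : ℕ) : ℝ) + 1) ≤ Gamma ((1 + s) + 1) :=
    Gamma_strictMonoOn_Ici.monotoneOn (by simp; linarith) (by simp; linarith)
      (by push_cast; linarith)
  rw [Gamma_nat_eq_factorial, Gamma_add_one (by linarith), Nat.factorial_succ] at h3
  push_cast at h3
  have hG : 0 < Gamma (1 + s) := Gamma_pos_of_pos (by linarith)
  have h4 : (1 + s) * Gamma (1 + s) ≤ (n + 1) * (2 * Gamma (1 + s)) := by nlinarith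
  exact le_of_mul_le_mul_left (h3.trans h4) (by linarith)

lemma Gamma_one_add_le_factorial {s : ℝ} (hs : 0 ≤ s) {n : ℕ} (hn : s ≤ n + 1) :
    Gamma (1 + s) ≤ (n + 2).factorial := by
  have h0 : (0 : ℝ) ≤ n := n.cast_nonneg
  have h3 : Gamma ((1 + s) + 1) ≤ Gamma (((n + 2 : ℕ) : ℝ) + 1) :=
    Gamma_strictMonoOn_Ici.monotoneOn (by simp; linarith) (by simp; linarith)
      (by push_cast; linarith)
  rw [Gamma_nat_eq_factorial, Gamma_add_one (by linarith)] at h3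
  have hG : 0 < Gamma (1 + s) := Gamma_pos_of_pos (by linarith)
  nlinarith

/-- Since `α ≥ 1/2`, every unit interval contains at most two multiples of `α`, so the
Mittag-Leffler series at `x ^ α` is controlled by the exponential series at `x`. -/
lemma mittagLeffler_rpow_summable_and_le {α x : ℝ} (hα : 1 / 2 ≤ α) (hx : 1 ≤ x) :
    Summable (fun k : ℕ => (x ^ α) ^ k / Gamma (1 + k * α)) ∧
      mittagLeffler α (x ^ α) ≤ 4 * x * exp x := by
  have hx0 : 0 < x := by linarith
  set g : ℕ → ℝ := fun n => 2 * x * (x ^ n / n.factorial) with hg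
  have hg0 : ∀ n, 0 ≤ g n := fun n => by positivity
  have hgs : HasSum g (2 * x * exp x) := by
    have := NormedSpace.expSeries_div_hasSum_exp x
    rw [← congrFun exp_eq_exp_ℝ x] at this
    exact this.mul_left _
  have hinj : ∀ i : ℕ, Function.Injective fun m : ℕ => ⌊((2 * m + i : ℕ) : ℝ) * α⌋₊ := by
    intro i
    refine (strictMono_nat_of_lt_succ fun m => ?_).injective
    have hfl := Nat.floor_le (show 0 ≤ ((2 * m + i : ℕ) : ℝ) * α by positivity)
    refine Nat.lt_of_lt_of_le (Nat.lt_succ_self _) (Nat.le_floor ?_)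
    push_cast at hfl ⊢
    linarith
  have hs : ∀ i : ℕ, Summable (fun m : ℕ => g ⌊((2 * m + i : ℕ) : ℝ) * α⌋₊) :=
    fun i => hgs.summable.comp_injective (hinj i)
  have hle : ∀ i : ℕ, ∑' m : ℕ, g ⌊((2 * m + i : ℕ) : ℝ) * α⌋₊ ≤ 2 * x * exp x := by
    intro i
    rw [← hgs.tsum_eq]
    exact tsum_comp_le_tsum_of_inj hgs.summable hg0 (hinj i)
  have hall : HasSum (fun k : ℕ => g ⌊(k : ℝ) * α⌋₊) _ :=
    HasSum.even_add_odd (f := fun k : ℕ => g ⌊(k : ℝ) * α⌋₊) (hs 0).hasSum (hs 1).hasSum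
  have hterm : ∀ k : ℕ, (x ^ α) ^ k / Gamma (1 + k * α) ≤ g ⌊(k : ℝ) * α⌋₊ := by
    intro k
    have hkα : 0 ≤ (k : ℝ) * α := by positivity
    have h1 := factorial_floor_le_two_mul_Gamma hkα
    have h2 : (x ^ α) ^ k ≤ x * x ^ ⌊(k : ℝ) * α⌋₊ := by
      rw [← rpow_natCast, ← rpow_mul hx0.le, ← pow_succ', ← rpow_natCast]
      refine rpow_le_rpow_of_exponent_le hx ?_
      push_cast
      rw [mul_comm]
      exact (Nat.lt_floor_add_one _).le
    have hG : 0 < Gamma (1 + k * α) := Gamma_pos_of_pos (by linarith)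
    have hf : (0 : ℝ) < (⌊(k : ℝ) * α⌋₊).factorial := by positivity
    calc _ ≤ x * x ^ ⌊(k : ℝ) * α⌋₊ / ((⌊(k : ℝ) * α⌋₊).factorial / 2) := by
          gcongr; linarith
      _ = _ := by simp only [hg]; field_simp
  have hsum : Summable (fun k : ℕ => (x ^ α) ^ k / Gamma (1 + k * α)) := by
    refine Summable.of_nonneg_of_le (fun k => ?_) hterm hall.summable
    have hG : 0 < Gamma (1 + k * α) := Gamma_pos_of_pos (by positivity)
    positivity
  refine ⟨hsum, ?_⟩
  calc mittagLeffler α (x ^ α) ≤ ∑' k : ℕ, g ⌊(k : ℝ) * α⌋₊ :=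
        hsum.tsum_le_tsum hterm hall.summable
    _ ≤ 4 * x * exp x := by
        rw [hall.tsum_eq]
        have h0 := hle 0
        have h1 := hle 1
        linarith

lemma summable_mittagLeffler {α : ℝ} (hα : 1 / 2 ≤ α) {r : ℝ} (hr : 0 ≤ r) :
    Summable (fun k : ℕ => r ^ k / Gamma (1 + k * α)) := by
  have h1 : (1 : ℝ) ≤ max 1 r ^ α⁻¹ := one_le_rpow (le_max_left _ _) (by positivity)
  have h2 := (mittagLeffler_rpow_summable_and_le hα h1).1
  rw [rpow_inv_rpow (by positivity) (by linarith)] at h2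
  refine Summable.of_nonneg_of_le (fun k => ?_) (fun k => ?_) h2
  all_goals have hG : 0 < Gamma (1 + k * α) := Gamma_pos_of_pos (by positivity)
  · positivity
  · gcongr
    exact le_max_right _ _

lemma mittagLeffler_nonneg {α r : ℝ} (hα : 0 ≤ α) (hr : 0 ≤ r) : 0 ≤ mittagLeffler α r :=
  tsum_nonneg fun k => div_nonneg (by positivity) (Gamma_pos_of_pos (by positivity)).le

lemma mittagLeffler_mono {α r s : ℝ} (hα : 1 / 2 ≤ α) (hr : 0 ≤ r) (hrs : r ≤ s) :
    mittagLeffler α r ≤ mittagLeffler α s := by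
  refine (summable_mittagLeffler hα hr).tsum_le_tsum (fun k => ?_)
    (summable_mittagLeffler hα (hr.trans hrs))
  have hG : 0 < Gamma (1 + k * α) := Gamma_pos_of_pos (by positivity)
  gcongr

lemma continuous_mittagLeffler {α : ℝ} (hα : 1 / 2 ≤ α) : Continuous (mittagLeffler α) := by
  rw [continuous_iff_continuousAt]
  intro r
  have h : ContinuousOn (mittagLeffler α) (Metric.ball 0 (|r| + 1)) := by
    refine continuousOn_tsum (fun k => by fun_prop)
      (summable_mittagLeffler hα (r := |r| + 1) (by positivity)) fun k s hs => ?_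
    have hG : 0 < Gamma (1 + k * α) := Gamma_pos_of_pos (by positivity)
    rw [mem_ball_zero_iff] at hs
    rw [norm_div, norm_pow, norm_of_nonneg hG.le]
    gcongr
  exact h.continuousAt (Metric.isOpen_ball.mem_nhds (by simp))

/-- Since `α < 1`, every unit interval contains a multiple of `α`. -/
lemma exp_sub_le_sq_mul_mittagLeffler {α x : ℝ} (hα : 1 / 2 ≤ α) (hα1 : α < 1) (hx : 1 ≤ x) :
    exp x - 1 - x ≤ x ^ 2 * mittagLeffler α (x ^ α) := by
  have hx0 : 0 < x := by linarith
  have hα0 : 0 < α := by linarith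
  have hs : HasSum (fun n : ℕ => x ^ n / (n.factorial : ℝ)) (exp x) := by
    have := NormedSpace.expSeries_div_hasSum_exp x
    rwa [← congrFun exp_eq_exp_ℝ x] at this
  have hs2 : HasSum (fun n : ℕ => x ^ (n + 2) / ((n + 2).factorial : ℝ)) (exp x - 1 - x) := by
    have h := (hasSum_nat_add_iff' 2).2 hs
    rw [sum_range_succ, sum_range_one, ← sub_sub] at h
    simpa only [pow_zero, pow_one, Nat.factorial_zero, Nat.factorial_one, Nat.cast_one,
      div_one] using h
  set e : ℕ → ℕ := fun n => ⌈(n : ℝ) / α⌉₊ with he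
  have hlb : ∀ n : ℕ, (n : ℝ) ≤ e n * α := fun n => by
    rw [← div_le_iff₀ hα0]; exact Nat.le_ceil _
  have hub : ∀ n : ℕ, (e n : ℝ) * α ≤ n + 1 := fun n => by
    have h := Nat.ceil_lt_add_one (show 0 ≤ (n : ℝ) / α by positivity)
    have : ((e n : ℝ)) * α < ((n : ℝ) / α + 1) * α := by gcongr
    rw [add_mul, div_mul_cancel₀ _ hα0.ne'] at this
    linarith
  have hinj : Function.Injective e := by
    refine (strictMono_nat_of_lt_succ fun n => ?_).injective
    have h := Nat.ceil_lt_add_one (show 0 ≤ (n : ℝ) / α by positivity)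
    have h2 := hlb (n + 1)
    have h1α : 1 ≤ 1 / α := (one_le_div hα0).2 hα1.le
    have h3 : ((n + 1 : ℕ) : ℝ) / α = n / α + 1 / α := by push_cast; ring
    rw [← div_le_iff₀ hα0, h3] at h2
    have : (e n : ℝ) < e (n + 1) := by linarith
    exact_mod_cast this
  have hE := summable_mittagLeffler hα (r := x ^ α) (by positivity)
  have hcomp := tsum_comp_le_tsum_of_inj hE (fun k => div_nonneg (by positivity)
    (Gamma_pos_of_pos (by positivity)).le) hinj
  rw [← hs2.tsum_eq]
  refine le_trans ?_ (mul_le_mul_of_nonneg_left hcomp (by positivity))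
  rw [← tsum_mul_left]
  refine hs2.summable.tsum_le_tsum (fun n => ?_) ((hE.comp_injective hinj).mul_left _)
  have hG : 0 < Gamma (1 + e n * α) := Gamma_pos_of_pos (by positivity)
  have h1 := Gamma_one_add_le_factorial (s := e n * α) (by positivity) (hub n)
  have h2 : x ^ n ≤ (x ^ α) ^ (e n) := by
    rw [← rpow_natCast, ← rpow_natCast, ← rpow_mul hx0.le]
    refine rpow_le_rpow_of_exponent_le hx ?_
    rw [mul_comm]; exact hlb n
  simp only [Function.comp_apply]
  rw [pow_add, mul_comm (x ^ n), mul_div_assoc]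
  gcongr

/-- Decay of the integrand beyond the unit frequency. -/
lemma abs_mittagLeffler_mul_cos_le {α x t ξ : ℝ} (hα0 : 0 < α) (hα1 : α < 1) (ht : 1 ≤ t)
    (hξ : 1 < ξ) :
    |mittagLeffler α ((1 - ξ ^ 2) * t ^ α) * cos (x * ξ)| ≤ (1 + Gamma (1 + α)) * ξ ^ (-2 : ℝ) := by
  have htα : 1 ≤ t ^ α := one_le_rpow ht hα0.le
  have hξ2 : 0 < ξ ^ 2 - 1 := by nlinarith
  have hy : 0 < (ξ ^ 2 - 1) * t ^ α := by positivity
  obtain ⟨h0, h1, h2⟩ := mittagLeffler_neg_bounds hα0 hα1 hy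
  rw [show -((ξ ^ 2 - 1) * t ^ α) = (1 - ξ ^ 2) * t ^ α by ring] at h0 h1 h2
  set E := mittagLeffler α ((1 - ξ ^ 2) * t ^ α)
  have h3 : ξ ^ 2 - 1 ≤ (ξ ^ 2 - 1) * t ^ α := le_mul_of_one_le_right hξ2.le htα
  have h4 : E * ξ ^ 2 ≤ 1 + Gamma (1 + α) := by nlinarith [mul_le_mul_of_nonneg_left h3 h0]
  rw [abs_mul, abs_of_nonneg h0, rpow_neg (by linarith), rpow_two, ← div_eq_mul_inv,
    le_div_iff₀ (by positivity)]
  refine le_trans ?_ h4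
  gcongr
  exact mul_le_of_le_one_right h0 (abs_cos_le_one _)

/-- Quantitative lower bound for the fundamental solution: the frequencies below `δ` contribute
at least `A` each, those in `(δ, 1]` at least `-B`, those above `1` a bounded amount. -/
lemma le_fundSol {α x t δ A B : ℝ} (hα : 1 / 2 ≤ α) (hα1 : α < 1) (ht : 1 ≤ t)
    (hδ0 : 0 ≤ δ) (hδ1 : δ ≤ 1) (hB : 0 ≤ B)
    (hlow : ∀ ξ, 0 < ξ → ξ ≤ δ → A ≤ mittagLeffler α ((1 - ξ ^ 2) * t ^ α) * cos (x * ξ))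
    (hmid : ∀ ξ, δ < ξ → ξ ≤ 1 → -B ≤ mittagLeffler α ((1 - ξ ^ 2) * t ^ α) * cos (x * ξ)) :
    1 / π * (δ * A - B - (1 + Gamma (1 + α))) ≤ fundSol α x t := by
  have hα0 : 0 < α := by linarith
  set G : ℝ → ℝ := fun ξ => mittagLeffler α ((1 - ξ ^ 2) * t ^ α) * cos (x * ξ) with hG
  have hcont : Continuous G := by
    have := continuous_mittagLeffler hα
    fun_prop
  have hbi : IntegrableOn (fun ξ : ℝ => (1 + Gamma (1 + α)) * ξ ^ (-2 : ℝ)) (Set.Ioi 1) :=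
    (integrableOn_Ioi_rpow_of_lt (by norm_num) one_pos).const_mul _
  have hi1 : IntegrableOn G (Set.Ioc 0 δ) :=
    (hcont.integrableOn_Icc (a := 0) (b := δ)).mono_set Set.Ioc_subset_Icc_self
  have hi2 : IntegrableOn G (Set.Ioc δ 1) :=
    (hcont.integrableOn_Icc (a := δ) (b := 1)).mono_set Set.Ioc_subset_Icc_self
  have hi3 : IntegrableOn G (Set.Ioi 1) := by
    refine Integrable.mono' hbi hcont.aestronglyMeasurable.restrict ?_
    exact (ae_restrict_iff' measurableSet_Ioi).2 (Eventually.of_forall fun ξ hξ =>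
      abs_mittagLeffler_mul_cos_le hα0 hα1 ht hξ)
  have hi23 : IntegrableOn G (Set.Ioi δ) := by
    rw [← Set.Ioc_union_Ioi_eq_Ioi hδ1]; exact hi2.union hi3
  have hsplit : ∫ ξ in Set.Ioi (0 : ℝ), G ξ =
      (∫ ξ in Set.Ioc 0 δ, G ξ) + ((∫ ξ in Set.Ioc δ 1, G ξ) + ∫ ξ in Set.Ioi 1, G ξ) := by
    rw [← setIntegral_union (Set.Ioc_disjoint_Ioi le_rfl) measurableSet_Ioi hi2 hi3,
      Set.Ioc_union_Ioi_eq_Ioi hδ1,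
      ← setIntegral_union (Set.Ioc_disjoint_Ioi le_rfl) measurableSet_Ioi hi1 hi23,
      Set.Ioc_union_Ioi_eq_Ioi hδ0]
  have h1 : δ * A ≤ ∫ ξ in Set.Ioc 0 δ, G ξ := by
    have := setIntegral_mono_on (f := fun _ : ℝ => A) (g := G) (s := Set.Ioc 0 δ)
      (by simp) hi1 measurableSet_Ioc fun ξ hξ => hlow ξ hξ.1 hξ.2
    simpa [hδ0] using this
  have h2 : -B ≤ ∫ ξ in Set.Ioc δ 1, G ξ := by
    have := setIntegral_mono_on (f := fun _ : ℝ => -B) (g := G) (s := Set.Ioc δ 1)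
      (by simp) hi2 measurableSet_Ioc fun ξ hξ => hmid ξ hξ.1 hξ.2
    simp only [setIntegral_const, volume_real_Ioc_of_le hδ1, smul_eq_mul] at this
    nlinarith
  have h3 : -(1 + Gamma (1 + α)) ≤ ∫ ξ in Set.Ioi 1, G ξ := by
    have := setIntegral_mono_on (g := G) hbi.neg hi3 measurableSet_Ioi fun ξ hξ =>
      (abs_le.1 (abs_mittagLeffler_mul_cos_le (x := x) hα0 hα1 ht hξ)).1
    refine le_trans (le_of_eq ?_) this
    simp only [Pi.neg_apply]
    rw [integral_neg, integral_const_mul, integral_Ioi_rpow_of_lt (by norm_num) one_pos]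
    norm_num
  rw [fundSol, hsplit]
  gcongr
  linarith

lemma sub_two_rpow_le {α t ξ : ℝ} (hα : 1 / 2 ≤ α) (ht : 2 ≤ t) (hξ : ξ ^ 2 ≤ 1 / t) :
    (t - 2) ^ α ≤ (1 - ξ ^ 2) * t ^ α := by
  have ht0 : 0 < t := by linarith
  have h1 : 0 ≤ 1 - 1 / t := by rw [sub_nonneg, div_le_one ht0]; linarith
  have h1' : 1 - 1 / t ≤ 1 := sub_le_self _ (by positivity)
  have h2 : t - 2 ≤ (1 - 1 / t) ^ (2 : ℝ) * t := by
    rw [rpow_two]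
    have : (1 - 1 / t) ^ 2 * t = t - 2 + 1 / t := by field_simp; ring
    have : 0 < 1 / t := by positivity
    linarith
  calc (t - 2) ^ α ≤ ((1 - 1 / t) ^ (2 : ℝ) * t) ^ α := by
        exact rpow_le_rpow (by linarith) h2 (by linarith)
    _ = (1 - 1 / t) ^ (2 * α) * t ^ α := by
        rw [mul_rpow (by positivity) ht0.le, ← rpow_mul h1]
    _ ≤ (1 - 1 / t) ^ (1 : ℝ) * t ^ α := by
        gcongr ?_ * _
        exact rpow_le_rpow_of_exponent_ge_of_imp h1 h1' (by linarith) (by intros; linarith)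
    _ ≤ (1 - ξ ^ 2) * t ^ α := by
        rw [rpow_one]; gcongr

/-- Lower bound for the fundamental solution at points `x` below the diffusive scale `√t`. -/
lemma exp_sub_le_fundSol {α x t : ℝ} (hα : 1 / 2 ≤ α) (hα1 : α < 1) (ht : 3 ≤ t)
    (hx : 2 ≤ x) (hxt : x ≤ t ^ (1 / 2 : ℝ)) :
    1 / π * ((exp (t - 2) - t) / (2 * t ^ 3) - 4 * t * exp (t - t / x ^ 2) -
      (1 + Gamma (1 + α))) ≤ fundSol α x t := by
  have hx0 : 0 < x := by linarith
  have ht0 : 0 < t := by linarith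
  have hα0 : 0 < α := by linarith
  set δ : ℝ := t ^ (-(1 / 2) : ℝ) with hδ
  have hδ0 : 0 < δ := by positivity
  have hδsq : δ ^ 2 = 1 / t := by
    rw [hδ, ← rpow_natCast, ← rpow_mul ht0.le]
    norm_num [rpow_neg_one]
  have hδx : δ ≤ 1 / x := by
    rw [hδ, rpow_neg ht0.le, ← one_div]; gcongr
  have hx1 : 1 / x ≤ 1 / 2 := by gcongr
  have htδ : 1 / t ≤ δ := by
    have : 1 / t ≤ 1 := by rw [div_le_one ht0]; linarith
    nlinarith
  set A := mittagLeffler α ((t - 2) ^ α) with hA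
  have hA0 : 0 ≤ A := mittagLeffler_nonneg hα0.le (rpow_nonneg (by linarith) _)
  have hA1 : (exp (t - 2) - t) / t ^ 2 ≤ A := by
    rw [div_le_iff₀ (by positivity)]
    have h := exp_sub_le_sq_mul_mittagLeffler hα hα1 (x := t - 2) (by linarith)
    have : (t - 2) ^ 2 * A ≤ t ^ 2 * A := by gcongr <;> linarith
    linarith
  have hcos : ∀ ξ, 0 < ξ → ξ ≤ 1 / x → 1 / 2 ≤ cos (x * ξ) := by
    intro ξ h0 h1
    have h2 : x * ξ ≤ 1 := by rwa [le_div_iff₀ hx0, mul_comm] at h1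
    have h3 : 0 < x * ξ := by positivity
    nlinarith [one_sub_sq_div_two_le_cos (x := x * ξ)]
  have hr : ∀ ξ, 0 < ξ → ξ ≤ 1 → 0 ≤ (1 - ξ ^ 2) * t ^ α := fun ξ h0 h1 =>
    mul_nonneg (by nlinarith) (by positivity)
  have key := le_fundSol (x := x) (t := t) (δ := δ) (A := A / 2)
    (B := 4 * t * exp (t - t / x ^ 2)) hα hα1 (by linarith) hδ0.le (by linarith)
    (by positivity) ?_ ?_
  · refine le_trans ?_ key
    gcongr
    calc (exp (t - 2) - t) / (2 * t ^ 3) = 1 / t * ((exp (t - 2) - t) / t ^ 2 / 2) := by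
          field_simp
      _ ≤ 1 / t * (A / 2) := by gcongr
      _ ≤ δ * (A / 2) := by gcongr
  · intro ξ h0 h1
    have h2 : ξ ^ 2 ≤ 1 / t := by rw [← hδsq]; gcongr
    have h3 := mittagLeffler_mono hα (rpow_nonneg (by linarith) _)
      (sub_two_rpow_le hα (by linarith) h2)
    have h4 := hcos ξ h0 (h1.trans hδx)
    rw [div_eq_mul_one_div]
    gcongr
    exact hA0.trans h3
  · intro ξ h0 h1
    have hξ0 : 0 < ξ := hδ0.trans h0
    have hE := mittagLeffler_nonneg hα0.le (hr ξ hξ0 h1)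
    rcases le_total ξ (1 / x) with h2 | h2
    · have h4 := hcos ξ hξ0 h2
      have : 0 ≤ mittagLeffler α ((1 - ξ ^ 2) * t ^ α) * cos (x * ξ) :=
        mul_nonneg hE (by linarith)
      have : 0 < 4 * t * exp (t - t / x ^ 2) := by positivity
      linarith
    · have hsq : 1 / x ^ 2 ≤ ξ ^ 2 := by
        rw [← one_div_pow]; gcongr
      have hxx : 1 / x ^ 2 ≤ 1 / 4 := by
        gcongr; nlinarith
      have hxp : 0 < 1 / x ^ 2 := by positivity
      set z := t * (1 - 1 / x ^ 2) with hz
      have hz1 : 1 ≤ z := by nlinarith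
      have hzt : z ≤ t := by nlinarith
      have h5 : (1 - ξ ^ 2) * t ^ α ≤ z ^ α := by
        rw [hz, mul_rpow ht0.le (by linarith), mul_comm]
        gcongr
        calc 1 - ξ ^ 2 ≤ (1 - 1 / x ^ 2) ^ (1 : ℝ) := by rw [rpow_one]; linarith
          _ ≤ _ := rpow_le_rpow_of_exponent_ge (by linarith) (by linarith) hα1.le
      have h6 := (mittagLeffler_mono hα (hr ξ hξ0 h1) h5).trans
        (mittagLeffler_rpow_summable_and_le hα hz1).2
      have h7 : 4 * z * exp z ≤ 4 * t * exp (t - t / x ^ 2) := by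
        have : z = t - t / x ^ 2 := by rw [hz]; ring
        rw [← this]; gcongr
      have h8 := neg_one_le_cos (x * ξ)
      nlinarith

theorem fundSol_tendsto_atTop (α c β : ℝ) (hα : 1 / 2 ≤ α) (hα1 : α < 1)
    (hc : 0 < c) (hβ : 0 < β) (hβ' : β < 1 / 2) :
    Filter.Tendsto (fun t : ℝ => fundSol α (c * t ^ β) t) Filter.atTop Filter.atTop := by
  set γ : ℝ := 1 - 2 * β with hγ
  have hγ0 : 0 < γ := by linarith
  have hlim1 : Tendsto (fun t : ℝ => t ^ 4 * exp (-(c ^ 2)⁻¹ * t ^ γ)) atTop (𝓝 0) := by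
    have h := (tendsto_rpow_mul_exp_neg_mul_atTop_nhds_zero (4 / γ) (c ^ 2)⁻¹
      (by positivity)).comp (tendsto_rpow_atTop hγ0)
    refine h.congr' ?_
    filter_upwards [eventually_gt_atTop 0] with t ht
    simp only [Function.comp_apply]
    rw [← rpow_mul ht.le, mul_div_cancel₀ _ hγ0.ne']
    norm_cast
  have hlim2 : Tendsto (fun t : ℝ => t * exp (-t)) atTop (𝓝 0) := by
    simpa using tendsto_pow_mul_exp_neg_atTop_nhds_zero 1
  have hlim3 : Tendsto (fun t : ℝ => exp (-2) / 2 - t * exp (-t) / 2 -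
      4 * (t ^ 4 * exp (-(c ^ 2)⁻¹ * t ^ γ))) atTop (𝓝 (exp (-2) / 2 - 0 / 2 - 4 * 0)) :=
    (tendsto_const_nhds.sub (hlim2.div_const 2)).sub (hlim1.const_mul 4)
  have hlim4 := (tendsto_exp_div_pow_atTop 3).atTop_mul_pos
    (show 0 < exp (-2) / 2 - 0 / 2 - 4 * 0 by have := exp_pos (-2); linarith) hlim3
  have hlim5 := (tendsto_atTop_add_const_right atTop (-(1 + Gamma (1 + α))) hlim4).const_mul_atTop
    (show 0 < 1 / π by positivity)
  refine tendsto_atTop_mono' atTop ?_ hlim5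
  have hev1 : ∀ᶠ t : ℝ in atTop, 2 / c ≤ t ^ β :=
    (tendsto_rpow_atTop hβ).eventually_ge_atTop _
  have hev2 : ∀ᶠ t : ℝ in atTop, c ≤ t ^ (1 / 2 - β) :=
    (tendsto_rpow_atTop (by linarith)).eventually_ge_atTop _
  filter_upwards [hev1, hev2, eventually_ge_atTop 3] with t h1 h2 ht
  have ht0 : 0 < t := by linarith
  have hx : 2 ≤ c * t ^ β := by rwa [div_le_iff₀ hc, mul_comm] at h1
  have hxt : c * t ^ β ≤ t ^ (1 / 2 : ℝ) := by
    calc c * t ^ β ≤ t ^ (1 / 2 - β) * t ^ β := by gcongr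
      _ = t ^ (1 / 2 : ℝ) := by rw [← rpow_add ht0]; congr 1; ring
  refine le_trans (le_of_eq ?_) (exp_sub_le_fundSol hα hα1 ht hx hxt)
  have h3 : t / (c * t ^ β) ^ 2 = (c ^ 2)⁻¹ * t ^ γ := by
    rw [hγ, rpow_sub ht0, rpow_one, mul_comm 2 β, rpow_mul ht0.le, rpow_two]
    field_simp
  rw [h3, sub_eq_add_neg t ((c ^ 2)⁻¹ * t ^ γ), sub_eq_add_neg t 2, exp_add, exp_add, exp_neg t,
    neg_mul]
  have := exp_pos t
  field_simp
  ring
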